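/- (Theorem 1, case of small ciphering probability.) Fix γ > 0, d_M > 0, d_K > 0 and set C = log₂(1+γ), V = 1 − (1+γ)^{−2}, ε(n, d) = Q((ln 2)·√(n/V)·(C − d/n)). Fix D_loss > 0, D_conf > 0 and α > 0, and define D(n_M, n_K) = ε(n_M, d_M)·D_loss + α·(1 − ε(n_M, d_M))·ε(n_K, d_K)·D_conf. Let 0 < a_M ≤ b_M and 0 < a_K ≤ b_K be blocklength bounds. If α·ε(a_K, d_K)·D_conf ≤ D_loss, then for all n_M ∈ [a_M, b_M] and n_K ∈ [a_K, b_K] one has D(n_M, n_K) ≤ D(a_M, a_K); that is, the maximum of D over the box is attained at (n_M^min, n_K^min). -/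

import Mathlib

/-- The Gaussian Q-function `Q(x) = (1/√(2π)) ∫_x^∞ e^{−t²/2} dt`. -/
noncomputable def gaussQ (x : ℝ) : ℝ :=
  (Real.sqrt (2 * Real.pi))⁻¹ * ∫ t in Set.Ioi x, Real.exp (-t ^ 2 / 2)

/-- Finite-blocklength error probability for SNR `γ`, payload `d`, blocklength `n`,
with capacity `C = log₂(1+γ)` and dispersion `V = 1 − (1+γ)^{−2}`. -/
noncomputable def epsFBL (γ d n : ℝ) : ℝ :=
  gaussQ (Real.log 2 * Real.sqrt (n / (1 - ((1 + γ) ^ 2)⁻¹)) *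
    (Real.logb 2 (1 + γ) - d / n))

/-- The eavesdropper's expected semantic distortion
`D(n_M, n_K) = ε(n_M,d_M)·D_loss + α·(1 − ε(n_M,d_M))·ε(n_K,d_K)·D_conf`. -/
noncomputable def deceptionDistortion (γ dM dK Dloss Dconf α nM nK : ℝ) : ℝ :=
  epsFBL γ dM nM * Dloss + α * (1 - epsFBL γ dM nM) * epsFBL γ dK nK * Dconf

/-!
The decoding argument `√(n/V)·(C − d/n)` is, up to a nonnegative factor, `C·√n − d/√n`, which
increases with `n`; as `Q` is a Gaussian tail, every error probability decreases with its
blocklength. The key blocklength enters `D` only through `ε_K`, with the nonnegative coefficient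
`α·(1 − ε_M)·D_conf`. Writing
`D = α·ε_K·D_conf + ε_M·(D_loss − α·ε_K·D_conf)` shows that `D` also decreases with the message
blocklength as soon as `α·ε_K·D_conf ≤ D_loss`; it suffices to have this at `n_K = a_K` if the key
blocklength is shortened first.
-/

open MeasureTheory ProbabilityTheory Set

theorem gaussQ_eq_measureReal_Ioi (x : ℝ) : gaussQ x = (gaussianReal 0 1).real (Ioi x) := by
  rw [measureReal_def, gaussianReal_apply_eq_integral 0 one_ne_zero,
    ENNReal.toReal_ofReal (integral_nonneg (gaussianPDFReal_nonneg 0 1)), gaussQ,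
    ← integral_const_mul]
  simp [gaussianPDFReal]

theorem gaussQ_antitone : Antitone gaussQ := fun x y hxy => by
  simp only [gaussQ_eq_measureReal_Ioi]
  exact measureReal_mono (Ioi_subset_Ioi hxy)

theorem gaussQ_le_one (x : ℝ) : gaussQ x ≤ 1 :=
  (gaussQ_eq_measureReal_Ioi x).trans_le measureReal_le_one

theorem sqrt_mul_sub_div_self (C d n : ℝ) : √n * (C - d / n) = C * √n - d / √n := by
  rw [mul_sub, mul_comm (√n) C, mul_div_left_comm, Real.sqrt_div_self, div_eq_mul_inv d]

theorem monotoneOn_sqrt_mul_sub_div {C d : ℝ} (hC : 0 ≤ C) (hd : 0 ≤ d) :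
    MonotoneOn (fun n : ℝ => √n * (C - d / n)) (Ioi 0) := by
  intro m hm n _ hmn
  have hsqrt : 0 < √m := Real.sqrt_pos.2 hm
  simp only [sqrt_mul_sub_div_self]
  gcongr

theorem epsFBL_le_one (γ d n : ℝ) : epsFBL γ d n ≤ 1 :=
  gaussQ_le_one _

theorem antitoneOn_epsFBL {γ d : ℝ} (hγ : 0 < γ) (hd : 0 ≤ d) :
    AntitoneOn (epsFBL γ d) (Ioi 0) := by
  have hC : 0 ≤ Real.logb 2 (1 + γ) := Real.logb_nonneg one_lt_two (by linarith)
  intro m hm n hn hmn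
  apply gaussQ_antitone
  rw [Real.sqrt_div (le_of_lt hm), Real.sqrt_div (le_of_lt hn), mul_assoc, mul_assoc,
    div_mul_eq_mul_div, div_mul_eq_mul_div]
  gcongr ?_ * (?_ / _)
  exact monotoneOn_sqrt_mul_sub_div hC hd hm hn hmn

section Distortion

variable {γ dM dK Dloss Dconf α : ℝ}

theorem antitoneOn_deceptionDistortion_keyBlocklength (hγ : 0 < γ) (hdK : 0 ≤ dK)
    (hDconf : 0 ≤ Dconf) (hα : 0 ≤ α) (nM : ℝ) :
    AntitoneOn (deceptionDistortion γ dM dK Dloss Dconf α nM) (Ioi 0) := by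
  intro m hm n hn hmn
  have hε : epsFBL γ dK n ≤ epsFBL γ dK m := antitoneOn_epsFBL hγ hdK hm hn hmn
  have hsuccess : 0 ≤ 1 - epsFBL γ dM nM := sub_nonneg.2 (epsFBL_le_one γ dM nM)
  unfold deceptionDistortion
  gcongr

theorem deceptionDistortion_eq_add_mul_sub (nM nK : ℝ) :
    deceptionDistortion γ dM dK Dloss Dconf α nM nK =
      α * epsFBL γ dK nK * Dconf + epsFBL γ dM nM * (Dloss - α * epsFBL γ dK nK * Dconf) := by
  unfold deceptionDistortion
  ring

theorem antitoneOn_deceptionDistortion_messageBlocklength {nK : ℝ} (hγ : 0 < γ) (hdM : 0 ≤ dM)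
    (hconf : α * epsFBL γ dK nK * Dconf ≤ Dloss) :
    AntitoneOn (fun nM => deceptionDistortion γ dM dK Dloss Dconf α nM nK) (Ioi 0) := by
  intro m hm n hn hmn
  have hε : epsFBL γ dM n ≤ epsFBL γ dM m := antitoneOn_epsFBL hγ hdM hm hn hmn
  simp only [deceptionDistortion_eq_add_mul_sub]
  exact add_le_add_right (mul_le_mul_of_nonneg_right hε (sub_nonneg.2 hconf)) _

end Distortion

/-- Theorem 1, case of small ciphering probability: if
`α·ε(a_K,d_K)·D_conf ≤ D_loss`, the maximum of the distortion `D` over the box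
`[a_M, b_M] × [a_K, b_K]` is attained at `(n_M^min, n_K^min) = (a_M, a_K)`. -/
theorem distortion_max_small_alpha
    (γ dM dK Dloss Dconf α aM bM aK bK : ℝ)
    (hγ : 0 < γ) (hdM : 0 < dM) (hdK : 0 < dK)
    (hDloss : 0 < Dloss) (hDconf : 0 < Dconf) (hα : 0 < α)
    (haM : 0 < aM) (hMb : aM ≤ bM) (haK : 0 < aK) (hKb : aK ≤ bK)
    (hcase : α * epsFBL γ dK aK * Dconf ≤ Dloss) :
    ∀ nM ∈ Set.Icc aM bM, ∀ nK ∈ Set.Icc aK bK,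
      deceptionDistortion γ dM dK Dloss Dconf α nM nK ≤
        deceptionDistortion γ dM dK Dloss Dconf α aM aK := by
  rintro nM ⟨hM, -⟩ nK ⟨hK, -⟩
  calc
    deceptionDistortion γ dM dK Dloss Dconf α nM nK
        ≤ deceptionDistortion γ dM dK Dloss Dconf α nM aK :=
      antitoneOn_deceptionDistortion_keyBlocklength hγ hdK.le hDconf.le hα.le nM
        haK (haK.trans_le hK) hK
    _ ≤ deceptionDistortion γ dM dK Dloss Dconf α aM aK :=
      antitoneOn_deceptionDistortion_messageBlocklength hγ hdM.le hcase
        haM (haM.trans_le hM) hM
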